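/- arXiv:2512.15709 — 2 statements merged into one kernel-verified Lean document; each statement's English description precedes it below -/
import Mathlib

section
/- Let T ≥ 1. For every ε > 0 there exist a sequence of non-negative reals (a_n)_{n ≥ 1} and a function A : ℂ → ℂ such that: A is meromorphic on ℂ; for every s with Re s > 1 the series ∑_{n ≥ 1} a_n n^{−s} converges absolutely with sum A(s); A is analytic at every point s ≠ 1 with |Im s| ≤ T; (s−1)·A(s) → 1 as s → 1 (i.e., A has a simple pole at s = 1 with residue 1); and limsup_{x→∞} (1/x)·∑_{n ≤ x} a_n > (π/T)·coth(π/T) + π/T − ε while liminf_{x→∞} (1/x)·∑_{n ≤ x} a_n < (π/T)·coth(π/T) − π/T + ε. -/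
open Real Filter

/-!
Take `a n = F (log n)` with `F` a nonnegative trigonometric polynomial of mean `1` and period
`P = 2 * π / τ`, where `τ` is slightly larger than `T`. The term of frequency `k * τ` contributes
`ζ (s - i k τ)` to the Dirichlet series, so the only pole with `|Im s| ≤ T` is the one at `1`, whose
residue is the mean of `F`. On the other hand `x⁻¹ ∑_{n ≤ x} F (log n)` is asymptotically the
average of `F` over the past of `log x` with exponentially decaying weights. If `F` is close to a
train of point masses `P` at the multiples of `P`, this average is nearly `P / (1 - exp (-P))` just
after a mass and `P * exp (-P) / (1 - exp (-P))` just before one, and with `P = 2 * y` these are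
`y * coth y ± y`.
-/

open MeasureTheory Set Topology Asymptotics

theorem uniformContinuous_of_periodic {α : Type*} [UniformSpace α] {F : ℝ → α} {P : ℝ}
    (hF : Continuous F) (hper : Function.Periodic F P) (hP : 0 < P) : UniformContinuous F := by
  have : Fact (0 < P) := ⟨hP⟩
  have hlift : Continuous (hper.lift : AddCircle P → α) := continuous_coinduced_dom.mpr hF
  exact (CompactSpace.uniformContinuous_of_continuous hlift).comp
    (uniformContinuous_addMonoidHom_of_continuous
      (f := QuotientAddGroup.mk' (AddSubgroup.zmultiples P)) continuous_quotient_mk')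

section ExponentialMean

variable {E : Type*} [NormedAddCommGroup E] [NormedSpace ℝ E] {F : ℝ → E} {P C : ℝ}

/-- The average of `F` over the past of `u` with weights decaying exponentially: the value at
`log x = u` that `x⁻¹ ∑_{n ≤ x} F (log n)` follows for large `x`. -/
noncomputable def expMean (F : ℝ → E) (u : ℝ) : E :=
  ∫ v in Iic 0, exp v • F (v + u)

theorem expMean_periodic (hF : Function.Periodic F P) :
    Function.Periodic (expMean F) P := fun u => by
  simp only [expMean, ← add_assoc, hF _]

theorem exp_smul_expMean (F : ℝ → E) (u : ℝ) :
    exp u • expMean F u = ∫ v in Iic u, exp v • F v := by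
  have hpre : (fun v => v + u) ⁻¹' Iic u = Iic 0 := by ext; simp
  rw [← (measurePreserving_add_right volume u).setIntegral_preimage_emb
    (measurableEmbedding_addRight u), hpre, expMean, ← integral_smul]
  simp only [smul_smul, ← exp_add, add_comm u]

theorem integrableOn_exp_smul_Iic (hF : Continuous F) (hC : ∀ v, ‖F v‖ ≤ C) (u : ℝ) :
    IntegrableOn (fun v => exp v • F v) (Iic u) :=
  (integrableOn_exp_Iic u).smul_bdd C hF.aestronglyMeasurable (.of_forall hC)

theorem norm_integral_exp_smul_le {a b : ℝ} (hab : a ≤ b) (hC : ∀ v ∈ Ioc a b, ‖F v‖ ≤ C) :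
    ‖∫ v in a..b, exp v • F v‖ ≤ (exp b - exp a) * C := by
  rw [← integral_exp, ← intervalIntegral.integral_mul_const]
  refine intervalIntegral.norm_integral_le_of_norm_le hab (.of_forall fun v hv => ?_)
    (by apply Continuous.intervalIntegrable; fun_prop)
  rw [norm_smul, norm_of_nonneg (exp_pos v).le]
  gcongr
  exact hC v hv

theorem expMean_eq_smul_integral (hF : Continuous F) (hper : Function.Periodic F P)
    (hP : P ≠ 0) (u : ℝ) :
    expMean F u = (exp (-u) / (1 - exp (-P))) • ∫ v in (u - P)..u, exp v • F v := by
  obtain ⟨C, hC⟩ := (hper.isBounded_of_continuous hP hF).exists_norm_le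
  have hint := integrableOn_exp_smul_Iic hF fun v => hC _ ⟨v, rfl⟩
  have hne : 1 - exp (-P) ≠ 0 := sub_ne_zero.mpr fun h => hP (by simpa using h.symm)
  rw [← intervalIntegral.integral_Iic_sub_Iic (hint _) (hint _), ← exp_smul_expMean,
    ← exp_smul_expMean, (expMean_periodic hper).sub_eq, ← sub_smul, smul_smul, div_mul_eq_mul_div,
    mul_sub, ← exp_add, ← exp_add, neg_add_cancel, exp_zero, neg_add_eq_sub, sub_sub_cancel_left,
    div_self hne, one_smul]

theorem integral_sub_smul_expMean_isLittleO (hF : Continuous F) (hC : ∀ v, ‖F v‖ ≤ C) :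
    (fun x : ℝ => (∫ v in 0..log ⌊x⌋₊, exp v • F v) - x • expMean F (log x))
      =o[atTop] fun x : ℝ => x := by
  have hint := integrableOn_exp_smul_Iic hF hC
  refine IsBigO.trans_isLittleO (.of_bound (C + ‖expMean F 0‖) ?_)
    (isLittleO_const_id_atTop (1 : ℝ))
  filter_upwards [eventually_ge_atTop 1] with x hx
  have hfloor : (0 : ℝ) < ⌊x⌋₊ := by exact_mod_cast Nat.floor_pos.mpr hx
  have hle : log ⌊x⌋₊ ≤ log x := by gcongr; exact Nat.floor_le (by linarith)
  have hsplit : (∫ v in 0..log ⌊x⌋₊, exp v • F v) - x • expMean F (log x) =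
      -(∫ v in log ⌊x⌋₊..log x, exp v • F v) - expMean F 0 := by
    have hmean := exp_smul_expMean F (log x)
    have hmean_zero := exp_smul_expMean F 0
    rw [exp_log (by linarith)] at hmean
    rw [exp_zero, one_smul] at hmean_zero
    rw [hmean, hmean_zero, ← intervalIntegral.integral_Iic_sub_Iic (hint _) (hint _),
      ← intervalIntegral.integral_Iic_sub_Iic (hint _) (hint _)]
    abel
  have htail : ‖∫ v in log ⌊x⌋₊..log x, exp v • F v‖ ≤ C := by
    refine (norm_integral_exp_smul_le hle fun v _ => hC v).trans ?_
    rw [exp_log hfloor, exp_log (by linarith)]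
    exact mul_le_of_le_one_left ((norm_nonneg _).trans (hC 0))
      (by linarith [Nat.lt_floor_add_one x])
  rw [hsplit, norm_one, mul_one]
  exact (norm_sub_le _ _).trans (by rw [norm_neg]; gcongr)

variable [CompleteSpace E]

theorem tendsto_sub_integral_exp_smul (hF : UniformContinuous F) :
    Tendsto (fun n : ℕ => F (log (n + 1 : ℕ)) - ∫ v in log n..log (n + 1 : ℕ), exp v • F v)
      atTop (𝓝 0) := by
  refine Metric.tendsto_atTop'.mpr fun ε hε => ?_
  obtain ⟨δ, hδ, hosc⟩ := Metric.uniformContinuous_iff.mp hF (ε / 2) (half_pos hε)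
  obtain ⟨M, hM⟩ := eventually_atTop.mp
    (tendsto_log_nat_add_one_sub_log.eventually (gt_mem_nhds hδ))
  refine ⟨M, fun n hn => ?_⟩
  have hgap := hM n hn.le
  have hn0 : n ≠ 0 := by lia
  have hle : log n ≤ log (n + 1 : ℕ) := by gcongr; lia
  have hmass : exp (log (n + 1 : ℕ)) - exp (log n) = 1 := by
    rw [exp_log (by positivity), exp_log (by positivity)]
    simp
  have hdiff : F (log (n + 1 : ℕ)) - ∫ v in log n..log (n + 1 : ℕ), exp v • F v =
      ∫ v in log n..log (n + 1 : ℕ), exp v • (F (log (n + 1 : ℕ)) - F v) := by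
    have hcont := hF.continuous
    simp_rw [smul_sub]
    rw [intervalIntegral.integral_sub (by apply Continuous.intervalIntegrable; fun_prop)
      (by apply Continuous.intervalIntegrable; fun_prop), intervalIntegral.integral_smul_const,
      integral_exp, hmass, one_smul]
  rw [dist_zero_right, hdiff]
  calc ‖∫ v in log n..log (n + 1 : ℕ), exp v • (F (log (n + 1 : ℕ)) - F v)‖
      ≤ (exp (log (n + 1 : ℕ)) - exp (log n)) * (ε / 2) := by
        refine norm_integral_exp_smul_le hle fun v hv => ?_
        rw [← dist_eq_norm]
        refine (hosc ?_).le
        rw [dist_eq, abs_of_nonneg (by linarith [hv.2])]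
        push_cast at hv ⊢
        linarith [hv.1]
    _ = ε / 2 := by rw [hmass, one_mul]
    _ < ε := half_lt_self hε

theorem sum_comp_log_sub_integral_isLittleO (hF : UniformContinuous F) :
    (fun n : ℕ => ∑ k ∈ Finset.Icc 1 n, F (log k) - ∫ v in 0..log n, exp v • F v)
      =o[atTop] fun n : ℕ => (n : ℝ) := by
  refine (isLittleO_sum_range_of_tendsto_zero (tendsto_sub_integral_exp_smul hF)).congr_left
    fun n => ?_
  have hcont := hF.continuous
  -- The interval of index `0` is degenerate because `log 0 = 0 = log 1`.
  rw [Finset.sum_sub_distrib, intervalIntegral.sum_integral_adjacent_intervals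
    (a := fun k : ℕ => log k) fun k _ => by apply Continuous.intervalIntegrable; fun_prop]
  rw [Finset.range_eq_Ico, Finset.sum_Ico_add' (fun k : ℕ => F (log k)), zero_add,
    Finset.Ico_add_one_right_eq_Icc, Nat.cast_zero, log_zero]

theorem sum_comp_log_sub_smul_expMean_isLittleO (hF : UniformContinuous F)
    (hC : ∀ v, ‖F v‖ ≤ C) :
    (fun x : ℝ => ∑ k ∈ Finset.Icc 1 ⌊x⌋₊, F (log k) - x • expMean F (log x))
      =o[atTop] fun x : ℝ => x := by
  have hsum := ((sum_comp_log_sub_integral_isLittleO hF).comp_tendsto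
    (tendsto_nat_floor_atTop (α := ℝ))).trans_isBigO isEquivalent_nat_floor.isBigO
  simpa using hsum.add (integral_sub_smul_expMean_isLittleO hF.continuous hC)

theorem mapClusterPt_expMean (hF : Continuous F) (hper : Function.Periodic F P) (hP : 0 < P)
    (u : ℝ) :
    MapClusterPt (expMean F u) atTop fun x : ℝ => x⁻¹ • ∑ k ∈ Finset.Icc 1 ⌊x⌋₊, F (log k) := by
  obtain ⟨C, hC⟩ := (hper.isBounded_of_continuous hP.ne' hF).exists_norm_le
  have hlim := (sum_comp_log_sub_smul_expMean_isLittleO (uniformContinuous_of_periodic hF hper hP)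
    fun v => hC _ ⟨v, rfl⟩).tendsto_inv_smul_nhds_zero
  have hseq : Tendsto (fun m : ℕ => exp (u + m * P)) atTop atTop :=
    tendsto_exp_atTop.comp <| tendsto_atTop_add_const_left _ _ <|
      tendsto_natCast_atTop_atTop.atTop_mul_const hP
  refine .of_comp hseq (Tendsto.mapClusterPt ?_)
  have hshift := (hlim.comp hseq).add_const (expMean F u)
  rw [zero_add] at hshift
  refine hshift.congr fun m => ?_
  simp only [Function.comp_apply, log_exp, smul_sub, (expMean_periodic hper).nat_mul m u]
  rw [inv_smul_smul₀ (exp_ne_zero _), sub_add_cancel]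

end ExponentialMean

theorem isBoundedUnder_abs_sum_div {a : ℕ → ℝ} {C : ℝ} (ha : ∀ n, |a n| ≤ C) :
    IsBoundedUnder (· ≤ ·) atTop fun x : ℝ => |(∑ n ∈ Finset.Icc 1 ⌊x⌋₊, a n) / x| := by
  refine isBoundedUnder_of_eventually_le (a := C) ?_
  filter_upwards [eventually_gt_atTop 0] with x hx
  rw [abs_div, abs_of_pos hx, div_le_iff₀ hx]
  calc |∑ n ∈ Finset.Icc 1 ⌊x⌋₊, a n| ≤ ⌊x⌋₊ * C := by
        simpa using (Finset.abs_sum_le_sum_abs a (Finset.Icc 1 ⌊x⌋₊)).trans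
          (Finset.sum_le_card_nsmul _ _ C fun n _ => ha n)
    _ ≤ x * C := by
        gcongr
        exacts [(abs_nonneg _).trans (ha 0), Nat.floor_le hx.le]
    _ = C * x := mul_comm _ _

theorem expMean_mem_Icc_liminf_limsup {F : ℝ → ℝ} {P : ℝ} (hF : Continuous F)
    (hper : Function.Periodic F P) (hP : 0 < P) (u : ℝ) :
    expMean F u ∈ Icc (liminf (fun x : ℝ => (∑ k ∈ Finset.Icc 1 ⌊x⌋₊, F (log k)) / x) atTop)
      (limsup (fun x : ℝ => (∑ k ∈ Finset.Icc 1 ⌊x⌋₊, F (log k)) / x) atTop) := by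
  obtain ⟨C, hC⟩ := (hper.isBounded_of_continuous hP.ne' hF).exists_norm_le
  have hcluster := mapClusterPt_expMean hF hper hP u
  simp only [smul_eq_mul, inv_mul_eq_div] at hcluster
  obtain ⟨habove, hbelow⟩ := isBoundedUnder_le_abs.mp
    (isBoundedUnder_abs_sum_div fun k : ℕ => hC (F (log k)) ⟨_, rfl⟩)
  exact ⟨hcluster.liminf_le hbelow, hcluster.le_limsup habove⟩

section PeakKernel

variable {c : ℝ → ℝ} {P δ : ℝ} {N : ℕ}

/-- The `N`-th power of a `P`-periodic function `c`, rescaled to have mean `1` over a period.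
For large `N` it concentrates near the maxima of `c`. -/
noncomputable def normalizedPow (P : ℝ) (c : ℝ → ℝ) (N : ℕ) (u : ℝ) : ℝ :=
  P / (∫ v in 0..P, c v ^ N) * c u ^ N

theorem continuous_normalizedPow (hc : Continuous c) : Continuous (normalizedPow P c N) := by
  unfold normalizedPow
  fun_prop

theorem normalizedPow_periodic (hper : Function.Periodic c P) :
    Function.Periodic (normalizedPow P c N) P := fun u => by
  simp only [normalizedPow, hper u]

theorem normalizedPow_nonneg (hP : 0 ≤ P) (hc : ∀ u, 0 ≤ c u) (u : ℝ) :
    0 ≤ normalizedPow P c N u :=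
  mul_nonneg (div_nonneg hP (intervalIntegral.integral_nonneg hP fun v _ => pow_nonneg (hc v) N))
    (pow_nonneg (hc u) N)

theorem integral_normalizedPow (hP : 0 < P) (hc : Continuous c) (hc_nonneg : ∀ u, 0 ≤ c u)
    (hc_zero : 0 < c 0) : ∫ u in 0..P, normalizedPow P c N u = P := by
  have hpos : 0 < ∫ v in 0..P, c v ^ N :=
    intervalIntegral.integral_pos hP (hc.pow N).continuousOn
      (fun v _ => pow_nonneg (hc_nonneg v) N) ⟨0, left_mem_Icc.mpr hP.le, pow_pos hc_zero N⟩
  simp only [normalizedPow]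
  rw [intervalIntegral.integral_const_mul, div_mul_cancel₀ _ hpos.ne']

theorem tendsto_expMean_normalizedPow (hc : Continuous c) (hper : Function.Periodic c P)
    (hc_nonneg : ∀ u, 0 ≤ c u) (hc_zero : 0 < c 0)
    (hc_lt : ∀ u ∈ Icc (δ - P) δ, u ≠ 0 → c u < c 0) (hδ : 0 < δ) (hδP : δ < P) :
    Tendsto (fun N => expMean (normalizedPow P c N) δ) atTop
      (𝓝 (P * exp (-δ) / (1 - exp (-P)))) := by
  have hP : 0 < P := hδ.trans hδP
  have hpeak := tendsto_setIntegral_pow_smul_of_unique_maximum_of_isCompact_of_continuousOn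
    (μ := volume) isCompact_Icc hc.continuousOn hc_lt (fun u _ => hc_nonneg u) hc_zero
    (by rw [interior_Icc]; exact subset_closure ⟨by linarith, hδ⟩) continuous_exp.continuousOn
  have hlim := hpeak.const_mul (P * exp (-δ) / (1 - exp (-P)))
  rw [exp_zero, mul_one] at hlim
  refine hlim.congr fun N => ?_
  have hmass : ∫ v in 0..P, c v ^ N = ∫ v in (δ - P)..δ, c v ^ N := by
    simpa using (hper.comp (· ^ N)).intervalIntegral_add_eq 0 (δ - P)
  have hweight : ∫ v in (δ - P)..δ, exp v • normalizedPow P c N v =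
      P / (∫ v in (δ - P)..δ, c v ^ N) * ∫ v in (δ - P)..δ, c v ^ N * exp v := by
    rw [← intervalIntegral.integral_const_mul, ← hmass]
    congr 1 with v
    rw [smul_eq_mul, normalizedPow]
    ring
  rw [expMean_eq_smul_integral (continuous_normalizedPow hc) (normalizedPow_periodic hper) hP.ne',
    hweight, integral_Icc_eq_integral_Ioc, integral_Icc_eq_integral_Ioc,
    ← intervalIntegral.integral_of_le (by linarith),
    ← intervalIntegral.integral_of_le (by linarith)]
  simp only [smul_eq_mul]
  ring

theorem exists_lt_expMean_normalizedPow_lt {b₁ b₂ : ℝ} (hP : 0 < P) (hc : Continuous c)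
    (hper : Function.Periodic c P) (hc_nonneg : ∀ u, 0 ≤ c u) (hc_zero : 0 < c 0)
    (hc_lt : ∀ u, |u| < P → u ≠ 0 → c u < c 0) (hb₁ : b₁ < P / (1 - exp (-P)))
    (hb₂ : P * exp (-P) / (1 - exp (-P)) < b₂) :
    ∃ N, (∃ u, b₁ < expMean (normalizedPow P c N) u) ∧
      ∃ u, expMean (normalizedPow P c N) u < b₂ := by
  have hlim {δ : ℝ} (hδ : 0 < δ) (hδP : δ < P) :=
    tendsto_expMean_normalizedPow hc hper hc_nonneg hc_zero
      (fun u hu => hc_lt u (abs_lt.mpr ⟨by linarith [hu.1], by linarith [hu.2]⟩)) hδ hδP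
  have hcont : Continuous fun δ => P * exp (-δ) / (1 - exp (-P)) := by fun_prop
  obtain ⟨δ₁, hδ₁, hδ₁P, hδ₁b⟩ : ∃ δ, 0 < δ ∧ δ < P ∧ b₁ < P * exp (-δ) / (1 - exp (-P)) := by
    have hnear := (hcont.tendsto' 0 (P / (1 - exp (-P))) (by simp)).eventually_const_lt hb₁
    exact ((frequently_gt_nhds 0).and_eventually ((gt_mem_nhds hP).and hnear)).exists
  obtain ⟨δ₂, hδ₂, hδ₂P, hδ₂b⟩ : ∃ δ, 0 < δ ∧ δ < P ∧ P * exp (-δ) / (1 - exp (-P)) < b₂ := by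
    have hnear := (hcont.tendsto P).eventually_lt_const hb₂
    obtain ⟨δ, hδP, hδ, hδb⟩ :=
      ((frequently_lt_nhds P).and_eventually ((lt_mem_nhds hP).and hnear)).exists
    exact ⟨δ, hδ, hδP, hδb⟩
  obtain ⟨N, hN₁, hN₂⟩ := (((hlim hδ₁ hδ₁P).eventually_const_lt hδ₁b).and
    ((hlim hδ₂ hδ₂P).eventually_lt_const hδ₂b)).exists
  exact ⟨N, ⟨δ₁, hN₁⟩, δ₂, hN₂⟩

end PeakKernel

section RaisedCosine

variable {τ : ℝ}

/-- The `2 * π / τ`-periodic peak `u ↦ (1 + cos (τ u)) / 2`, with values in `[0, 1]` and the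
value `1` only at multiples of the period. -/
noncomputable def raisedCosine (τ u : ℝ) : ℝ :=
  (1 + cos (τ * u)) / 2

theorem continuous_raisedCosine (τ : ℝ) : Continuous (raisedCosine τ) := by
  unfold raisedCosine
  fun_prop

theorem raisedCosine_nonneg (τ u : ℝ) : 0 ≤ raisedCosine τ u := by
  unfold raisedCosine
  linarith [neg_one_le_cos (τ * u)]

theorem raisedCosine_zero (τ : ℝ) : raisedCosine τ 0 = 1 := by
  simp [raisedCosine, one_add_one_eq_two]

theorem raisedCosine_periodic (hτ : τ ≠ 0) :
    Function.Periodic (raisedCosine τ) (2 * π / τ) := fun u => by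
  simp only [raisedCosine, mul_add, mul_div_cancel₀ _ hτ, cos_add_two_pi]

theorem raisedCosine_lt_one (hτ : 0 < τ) {u : ℝ} (hu : |u| < 2 * π / τ) (hu0 : u ≠ 0) :
    raisedCosine τ u < 1 := by
  unfold raisedCosine
  have hlt : |τ * u| < 2 * π := by
    rwa [abs_mul, abs_of_pos hτ, ← lt_div_iff₀' hτ]
  have hne : cos (τ * u) ≠ 1 := fun h => by
    have := (cos_eq_one_iff_of_lt_of_lt (abs_lt.mp hlt).1 (abs_lt.mp hlt).2).mp h
    exact mul_ne_zero hτ.ne' hu0 this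
  linarith [lt_of_le_of_ne (cos_le_one _) hne]

end RaisedCosine

section DirichletSeries

open LaurentPolynomial Complex

variable {τ : ℝ} {s : ℂ} {p : ℂ[T;T⁻¹]}

/-- The character `k ↦ exp (i k τ u)` of `ℤ`, the value of the variable `T` being `exp (i τ u)`. -/
noncomputable def expChar (τ u : ℝ) : Multiplicative ℤ →* ℂ where
  toFun k := cexp (k.toAdd * τ * u * I)
  map_one' := by simp
  map_mul' k l := by rw [← Complex.exp_add]; push_cast [toAdd_mul]; ring_nf

/-- The trigonometric polynomial `u ↦ ∑ₖ pₖ exp (i k τ u)`. -/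
noncomputable def trigEval (τ u : ℝ) : ℂ[T;T⁻¹] →ₐ[ℂ] ℂ :=
  AddMonoidAlgebra.lift ℂ ℂ ℤ (expChar τ u)

/-- The Dirichlet series of `n ↦ trigEval τ (log n) p`, continued to the whole plane as a linear
combination of vertical shifts of the zeta function. -/
noncomputable def zetaShift (τ : ℝ) (p : ℂ[T;T⁻¹]) (s : ℂ) : ℂ :=
  ∑ k ∈ p.coeff.support, p.coeff k * riemannZeta (s - k * τ * I)

theorem trigEval_eq_sum (τ u : ℝ) (p : ℂ[T;T⁻¹]) :
    trigEval τ u p = ∑ k ∈ p.coeff.support, p.coeff k * cexp (k * τ * u * I) :=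
  AddMonoidAlgebra.lift_apply _ _

theorem trigEval_raisedCosine (τ u : ℝ) :
    trigEval τ u (C (1 / 4) * (T 1 + 2 + T (-1))) = raisedCosine τ u := by
  have hT (k : ℤ) : trigEval τ u (T k) = cexp (k * τ * u * I) := by
    exact (AddMonoidAlgebra.lift_single _ _ _).trans (by simp [expChar])
  have hC (a : ℂ) : trigEval τ u (C a) = a := by
    simpa using (trigEval τ u).commutes a
  rw [raisedCosine]
  push_cast
  rw [map_mul, map_add, map_add, hT, hT, hC, map_ofNat, Complex.cos]
  push_cast
  ring_nf

theorem hasSum_zetaShift (hs : 1 < s.re) :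
    HasSum (fun n : ℕ => trigEval τ (Real.log n) p * (n : ℂ) ^ (-s)) (zetaShift τ p s) := by
  have hterm (k : ℤ) (n : ℕ) : cexp (k * τ * Real.log n * I) * (n : ℂ) ^ (-s) =
      1 / (n : ℂ) ^ (s - k * τ * I) := by
    have hre : 0 < (s - k * τ * I).re := by simp; linarith
    rcases eq_or_ne n 0 with rfl | hn
    · have hs0 : -s ≠ 0 := fun h => by simp [neg_eq_zero.mp h] at hs; linarith
      have hshift : s - k * τ * I ≠ 0 := fun h => by simp [h] at hre
      simp [Complex.zero_cpow hs0, Complex.zero_cpow hshift]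
    · have hn0 : (n : ℂ) ≠ 0 := Nat.cast_ne_zero.mpr hn
      rw [one_div, ← Complex.cpow_neg, Complex.cpow_def_of_ne_zero hn0,
        Complex.cpow_def_of_ne_zero hn0, ← Complex.exp_add, Complex.natCast_log]
      ring_nf
  have hzeta (k : ℤ) : HasSum (fun n : ℕ => 1 / (n : ℂ) ^ (s - k * τ * I))
      (riemannZeta (s - k * τ * I)) := by
    have hre : 1 < (s - k * τ * I).re := by simpa using hs
    rw [zeta_eq_tsum_one_div_nat_cpow hre]
    exact (Complex.summable_one_div_nat_cpow.mpr hre).hasSum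
  simp_rw [trigEval_eq_sum, Finset.sum_mul, mul_assoc (p.coeff _), hterm]
  exact hasSum_sum fun k _ => (hzeta k).mul_left _

theorem meromorphicAt_riemannZeta (s : ℂ) : MeromorphicAt riemannZeta s := by
  rcases eq_or_ne s 1 with rfl | hs
  · -- The second factor `s - 1` makes the junk value of `ζ` at `1` harmless.
    refine ⟨2, analyticAt_of_differentiable_on_punctured_nhds_of_continuousAt ?_ ?_⟩
    · filter_upwards [self_mem_nhdsWithin] with z hz
      exact ((differentiableAt_id.sub_const 1).pow 2).smul (differentiableAt_riemannZeta hz)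
    · have hlim : Tendsto (fun z : ℂ => (z - 1) * ((z - 1) * riemannZeta z)) (𝓝[≠] 1) (𝓝 0) := by
        have hsub : Tendsto (fun z : ℂ => z - 1) (𝓝[≠] 1) (𝓝 0) :=
          ((continuous_sub_right (1 : ℂ)).tendsto' 1 0 (sub_self 1)).mono_left nhdsWithin_le_nhds
        simpa using hsub.mul riemannZeta_residue_one
      refine continuousAt_iff_punctured_nhds.mpr ?_
      simpa [pow_two, mul_assoc] using hlim
  · exact (analyticOn_riemannZeta s hs).meromorphicAt

theorem meromorphicAt_zetaShift (τ : ℝ) (p : ℂ[T;T⁻¹]) (s : ℂ) :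
    MeromorphicAt (zetaShift τ p) s :=
  MeromorphicAt.fun_sum fun k _ => (MeromorphicAt.const _ _).fun_mul <|
    MeromorphicAt.comp_analyticAt (g := fun z => z - k * τ * I) (meromorphicAt_riemannZeta _)
      (by fun_prop)

theorem analyticAt_zetaShift (h : ∀ k ∈ p.coeff.support, s ≠ 1 + k * τ * I) :
    AnalyticAt ℂ (zetaShift τ p) s :=
  Finset.analyticAt_fun_sum _ fun k hk => analyticAt_const.mul <|
    AnalyticAt.fun_comp (f := fun z => z - k * τ * I)
      (analyticOn_riemannZeta _ fun hpole => h k hk (sub_eq_iff_eq_add.mp hpole)) (by fun_prop)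

theorem ne_one_add_int_mul_I (hs : s ≠ 1) (him : |s.im| < |τ|) (k : ℤ) :
    s ≠ 1 + k * τ * I := by
  rintro rfl
  have hk : k ≠ 0 := by rintro rfl; simp at hs
  have hk1 : (1 : ℝ) ≤ |(k : ℝ)| := by exact_mod_cast Int.one_le_abs hk
  have : |(k : ℝ)| * |τ| < |τ| := by simpa [abs_mul] using him
  nlinarith [abs_nonneg τ]

theorem tendsto_sub_one_mul_zetaShift (hτ : τ ≠ 0) :
    Tendsto (fun s => (s - 1) * zetaShift τ p s) (𝓝[≠] 1) (𝓝 (p.coeff 0)) := by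
  have hterm (k : ℤ) : Tendsto (fun s : ℂ => (s - 1) * riemannZeta (s - k * τ * I)) (𝓝[≠] 1)
      (𝓝 (if k = 0 then 1 else 0)) := by
    split_ifs with hk
    · simpa [hk] using riemannZeta_residue_one
    · have hne : (1 : ℂ) - k * τ * I ≠ 1 := by simp [hk, hτ]
      have hcont : ContinuousAt (fun s : ℂ => (s - 1) * riemannZeta (s - k * τ * I)) 1 :=
        ContinuousAt.mul (by fun_prop) <|
          ContinuousAt.comp' (differentiableAt_riemannZeta hne).continuousAt (by fun_prop)
      simpa using hcont.tendsto.mono_left nhdsWithin_le_nhds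
  have hsum := tendsto_finsetSum p.coeff.support fun k _ => (hterm k).const_mul (p.coeff k)
  convert hsum using 2
  · simp only [zetaShift, Finset.mul_sum, mul_left_comm]
  · simp

theorem integral_trigEval (hτ : τ ≠ 0) :
    ∫ u in 0..2 * π / τ, trigEval τ u p = (2 * π / τ : ℝ) * p.coeff 0 := by
  have hterm (k : ℤ) : ∫ u in 0..2 * π / τ, cexp (k * τ * u * I) =
      if k = 0 then ((2 * π / τ : ℝ) : ℂ) else 0 := by
    split_ifs with hk
    · simp [hk]
    · have hne : k * τ * I ≠ 0 := by simp [hk, hτ]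
      have hperiod : k * τ * I * (2 * π / τ : ℝ) = k * (2 * π * I) := by
        push_cast
        field_simp [ofReal_ne_zero.mpr hτ]
      simp_rw [mul_right_comm (k * τ : ℂ) _ I]
      rw [integral_exp_mul_complex hne, hperiod, Complex.exp_int_mul_two_pi_mul_I]
      simp
  simp_rw [trigEval_eq_sum]
  rw [intervalIntegral.integral_finsetSum fun k _ => by
    apply Continuous.intervalIntegrable; fun_prop]
  simp_rw [intervalIntegral.integral_const_mul, hterm]
  simp +contextual [mul_comm]

theorem exists_trigEval_eq_normalizedPow (hτ : 0 < τ) (N : ℕ) :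
    ∃ p : ℂ[T;T⁻¹], p.coeff 0 = 1 ∧
      ∀ u, trigEval τ u p = normalizedPow (2 * π / τ) (raisedCosine τ) N u := by
  have hP : 0 < 2 * π / τ := by positivity
  set κ : ℝ := 2 * π / τ / ∫ v in 0..2 * π / τ, raisedCosine τ v ^ N with hκ
  let p : ℂ[T;T⁻¹] := (κ : ℂ) • (C (1 / 4) * (T 1 + 2 + T (-1))) ^ N
  have hp (u : ℝ) : trigEval τ u p = normalizedPow (2 * π / τ) (raisedCosine τ) N u := by
    simp only [p, map_smul, map_pow, trigEval_raisedCosine, smul_eq_mul, normalizedPow, ← hκ]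
    push_cast
    rfl
  refine ⟨p, ?_, hp⟩
  have hmean := integral_trigEval (p := p) hτ.ne'
  simp only [hp, intervalIntegral.integral_ofReal] at hmean
  rw [integral_normalizedPow hP (continuous_raisedCosine τ) (raisedCosine_nonneg τ)
    (by simp [raisedCosine_zero])] at hmean
  exact (mul_eq_left₀ (ofReal_ne_zero.mpr hP.ne')).mp hmean.symm

end DirichletSeries

section Coth

variable {y : ℝ}

theorem two_mul_div_one_sub_exp_neg (hy : y ≠ 0) :
    2 * y / (1 - exp (-(2 * y))) = y * (cosh y / sinh y) + y := by
  have hsinh : sinh y ≠ 0 := sinh_ne_zero.mpr hy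
  have hden : 1 - exp (-(2 * y)) = 2 * sinh y / exp y := by
    rw [eq_div_iff (exp_ne_zero y), sub_mul, one_mul, ← exp_add, sinh_eq]
    ring_nf
  rw [hden, ← cosh_add_sinh y]
  field_simp

theorem two_mul_mul_exp_neg_div_one_sub_exp_neg (hy : y ≠ 0) :
    2 * y * exp (-(2 * y)) / (1 - exp (-(2 * y))) = y * (cosh y / sinh y) - y := by
  have hden : 1 - exp (-(2 * y)) ≠ 0 := sub_ne_zero.mpr fun h => hy (by simpa using h.symm)
  rw [← sub_eq_iff_eq_add.mpr (two_mul_div_one_sub_exp_neg hy)]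
  field_simp
  ring

end Coth

theorem exists_frequency_gt_coth_bounds {T ε : ℝ} (hT : 0 < T) (hε : 0 < ε) :
    ∃ τ > T,
      π / T * (cosh (π / T) / sinh (π / T)) + π / T - ε <
        2 * π / τ / (1 - exp (-(2 * π / τ))) ∧
      2 * π / τ * exp (-(2 * π / τ)) / (1 - exp (-(2 * π / τ))) <
        π / T * (cosh (π / T) / sinh (π / T)) - π / T + ε := by
  have hy : π / T ≠ 0 := (div_pos pi_pos hT).ne'
  have hden : 1 - exp (-(2 * π / T)) ≠ 0 :=
    sub_ne_zero.mpr fun h => hy (by simpa [hT.ne', pi_ne_zero] using h.symm)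
  rw [← two_mul_div_one_sub_exp_neg hy, ← two_mul_mul_exp_neg_div_one_sub_exp_neg hy,
    ← mul_div_assoc]
  have hupper : ContinuousAt (fun τ => 2 * π / τ / (1 - exp (-(2 * π / τ)))) T := by
    fun_prop (disch := first | assumption | exact hT.ne')
  have hlower : ContinuousAt
      (fun τ => 2 * π / τ * exp (-(2 * π / τ)) / (1 - exp (-(2 * π / τ)))) T := by
    fun_prop (disch := first | assumption | exact hT.ne')
  have hnear := (hupper.tendsto.eventually_const_lt (sub_lt_self _ hε)).and
    (hlower.tendsto.eventually_lt_const (lt_add_of_pos_right _ hε))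
  exact ((frequently_gt_nhds T).and_eventually hnear).exists

theorem stmt_3_general (T : ℝ) (hT : 0 < T) (ε : ℝ) (hε : 0 < ε) :
    ∃ (a : ℕ → ℝ) (A : ℂ → ℂ),
      (∀ n, 0 ≤ a n) ∧
      (∀ s : ℂ, MeromorphicAt A s) ∧
      (∀ s : ℂ, 1 < s.re →
        Summable (fun n : ℕ => ‖(a n : ℂ) * (n : ℂ) ^ (-s)‖) ∧
        HasSum (fun n : ℕ => (a n : ℂ) * (n : ℂ) ^ (-s)) (A s)) ∧
      (∀ s : ℂ, s ≠ 1 → |s.im| ≤ T → AnalyticAt ℂ A s) ∧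
      Filter.Tendsto (fun s : ℂ => (s - 1) * A s) (nhdsWithin 1 {(1 : ℂ)}ᶜ) (nhds 1) ∧
      Filter.limsup (fun x : ℝ => (∑ n ∈ Finset.Icc 1 ⌊x⌋₊, a n) / x) Filter.atTop
        > π / T * (Real.cosh (π / T) / Real.sinh (π / T)) + π / T - ε ∧
      Filter.liminf (fun x : ℝ => (∑ n ∈ Finset.Icc 1 ⌊x⌋₊, a n) / x) Filter.atTop
        < π / T * (Real.cosh (π / T) / Real.sinh (π / T)) - π / T + ε := by
  obtain ⟨τ, hTτ, hupper, hlower⟩ := exists_frequency_gt_coth_bounds hT hε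
  have hτ : 0 < τ := hT.trans hTτ
  have hP : 0 < 2 * π / τ := by positivity
  have hcont := continuous_raisedCosine τ
  have hper := raisedCosine_periodic hτ.ne'
  obtain ⟨N, ⟨u₁, hu₁⟩, u₂, hu₂⟩ := exists_lt_expMean_normalizedPow_lt hP hcont hper
    (raisedCosine_nonneg τ) (by simp [raisedCosine_zero])
    (fun u hu hu0 => (raisedCosine_lt_one hτ hu hu0).trans_eq (raisedCosine_zero τ).symm)
    hupper hlower
  obtain ⟨p, hp_zero, hp⟩ := exists_trigEval_eq_normalizedPow hτ N
  have hmean := expMean_mem_Icc_liminf_limsup (continuous_normalizedPow (N := N) hcont)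
    (normalizedPow_periodic hper) hP
  refine ⟨fun n => normalizedPow (2 * π / τ) (raisedCosine τ) N (log n), zetaShift τ p,
    fun n => normalizedPow_nonneg hP.le (raisedCosine_nonneg τ) _, meromorphicAt_zetaShift τ p,
    fun s hs => ?_, fun s hs him => ?_, hp_zero ▸ tendsto_sub_one_mul_zetaShift hτ.ne',
    hu₁.trans_le (hmean u₁).2, (hmean u₂).1.trans_lt hu₂⟩
  · simp only [← hp]
    exact ⟨(hasSum_zetaShift hs).summable.norm, hasSum_zetaShift hs⟩
  · have him_lt : |s.im| < |τ| := (him.trans_lt hTτ).trans_le (le_abs_self τ)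
    exact analyticAt_zetaShift fun k _ => ne_one_add_int_mul_I hs him_lt k

theorem stmt_3 (T : ℝ) (hT : 1 ≤ T) (ε : ℝ) (hε : 0 < ε) :
    ∃ (a : ℕ → ℝ) (A : ℂ → ℂ),
      (∀ n, 0 ≤ a n) ∧
      (∀ s : ℂ, MeromorphicAt A s) ∧
      (∀ s : ℂ, 1 < s.re →
        Summable (fun n : ℕ => ‖(a n : ℂ) * (n : ℂ) ^ (-s)‖) ∧
        HasSum (fun n : ℕ => (a n : ℂ) * (n : ℂ) ^ (-s)) (A s)) ∧
      (∀ s : ℂ, s ≠ 1 → |s.im| ≤ T → AnalyticAt ℂ A s) ∧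
      Filter.Tendsto (fun s : ℂ => (s - 1) * A s) (nhdsWithin 1 {(1 : ℂ)}ᶜ) (nhds 1) ∧
      Filter.limsup (fun x : ℝ => (∑ n ∈ Finset.Icc 1 ⌊x⌋₊, a n) / x) Filter.atTop
        > π / T * (Real.cosh (π / T) / Real.sinh (π / T)) + π / T - ε ∧
      Filter.liminf (fun x : ℝ => (∑ n ∈ Finset.Icc 1 ⌊x⌋₊, a n) / x) Filter.atTop
        < π / T * (Real.cosh (π / T) / Real.sinh (π / T)) - π / T + ε :=
  stmt_3_general T (one_pos.trans_le hT) ε hε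
end

section
/- Let g(t) = tan(e^{3πi/4}·t) for real t, where tan is the complex tangent. Then g(0) = 0, |g'(t)| ≤ 1 for all real t, and consequently |g(t)| ≤ |t| for all real t. -/
/-!
Since `‖cos z‖² = cos² x + sinh² y` for `z = x + iy`, and `|sin x| ≤ |x| ≤ |y| ≤ |sinh y|` in the
double sector `|x| ≤ |y|`, the derivative `1 / cos²` of `tan` has norm at most `1` there. The sector
is closed under real scaling, so the mean value inequality along the line through `0` and `z` gives
`‖tan z‖ ≤ ‖z‖`; the line through `e^{3πi/4}` is an edge of the sector.
-/

open Real

lemma norm_sq_complex_cos (z : ℂ) :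
    ‖Complex.cos z‖ ^ 2 = Real.cos z.re ^ 2 + Real.sinh z.im ^ 2 := by
  have cos_eq : Complex.cos z = ((Real.cos z.re * Real.cosh z.im : ℝ) : ℂ) +
      ((-(Real.sin z.re * Real.sinh z.im) : ℝ) : ℂ) * Complex.I := by
    rw [Complex.cos_eq]
    push_cast
    ring
  rw [cos_eq, ← Complex.normSq_eq_norm_sq, Complex.normSq_add_mul_I, neg_sq, mul_pow, mul_pow,
    Real.cosh_sq, Real.sin_sq]
  ring

lemma abs_sin_le_abs_sinh {x y : ℝ} (h : |x| ≤ |y|) : |sin x| ≤ |sinh y| :=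
  calc |sin x| ≤ |x| := abs_sin_le_abs
    _ ≤ |y| := h
    _ ≤ sinh |y| := self_le_sinh_iff.2 (abs_nonneg y)
    _ = |sinh y| := (abs_sinh y).symm

lemma one_le_norm_complex_cos {z : ℂ} (hz : |z.re| ≤ |z.im|) : 1 ≤ ‖Complex.cos z‖ := by
  rw [← one_le_sq_iff₀ (norm_nonneg _)]
  calc 1 = cos z.re ^ 2 + sin z.re ^ 2 := (cos_sq_add_sin_sq z.re).symm
    _ ≤ cos z.re ^ 2 + sinh z.im ^ 2 := by
      gcongr 1
      exact sq_le_sq.2 (abs_sin_le_abs_sinh hz)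
    _ = ‖Complex.cos z‖ ^ 2 := (norm_sq_complex_cos z).symm

lemma complex_cos_ne_zero {z : ℂ} (hz : |z.re| ≤ |z.im|) : Complex.cos z ≠ 0 :=
  norm_pos_iff.1 (one_pos.trans_le (one_le_norm_complex_cos hz))

lemma abs_re_mul_ofReal_le_abs_im {w : ℂ} (hw : |w.re| ≤ |w.im|) (t : ℝ) :
    |(w * t).re| ≤ |(w * t).im| := by
  rw [Complex.re_mul_ofReal, Complex.im_mul_ofReal, abs_mul, abs_mul]
  gcongr

lemma hasDerivAt_complex_tan_mul_ofReal {w : ℂ} {t : ℝ} (h : Complex.cos (w * t) ≠ 0) :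
    HasDerivAt (fun s : ℝ => Complex.tan (w * s)) (1 / Complex.cos (w * t) ^ 2 * w) t :=
  ((Complex.hasDerivAt_tan h).comp (t : ℂ) (hasDerivAt_const_mul w)).comp_ofReal

lemma differentiableAt_complex_tan_mul_ofReal {w : ℂ} (hw : |w.re| ≤ |w.im|) (t : ℝ) :
    DifferentiableAt ℝ (fun s : ℝ => Complex.tan (w * s)) t :=
  (hasDerivAt_complex_tan_mul_ofReal
    (complex_cos_ne_zero (abs_re_mul_ofReal_le_abs_im hw t))).differentiableAt

lemma norm_deriv_complex_tan_mul_ofReal_le {w : ℂ} (hw : |w.re| ≤ |w.im|) (t : ℝ) :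
    ‖deriv (fun s : ℝ => Complex.tan (w * s)) t‖ ≤ ‖w‖ := by
  have hwt := abs_re_mul_ofReal_le_abs_im hw t
  rw [(hasDerivAt_complex_tan_mul_ofReal (complex_cos_ne_zero hwt)).deriv, norm_mul, norm_div,
    norm_one, norm_pow]
  refine mul_le_of_le_one_left (norm_nonneg w) (div_le_one_of_le₀ ?_ (by positivity))
  exact one_le_pow₀ (one_le_norm_complex_cos hwt)

lemma norm_complex_tan_le_norm {w : ℂ} (hw : |w.re| ≤ |w.im|) :
    ‖Complex.tan w‖ ≤ ‖w‖ := by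
  simpa using Convex.norm_image_sub_le_of_norm_deriv_le (𝕜 := ℝ) (x := 0) (y := 1)
    (fun t _ => differentiableAt_complex_tan_mul_ofReal hw t)
    (fun t _ => norm_deriv_complex_tan_mul_ofReal_le hw t)
    convex_univ (Set.mem_univ _) (Set.mem_univ _)

theorem stmt_14_general {w : ℂ} (hw : |w.re| ≤ |w.im|) :
    Complex.tan (w * ((0 : ℝ) : ℂ)) = 0 ∧
    (∀ t : ℝ, ‖deriv (fun t : ℝ => Complex.tan (w * t)) t‖ ≤ ‖w‖) ∧
    (∀ t : ℝ, ‖Complex.tan (w * t)‖ ≤ ‖w‖ * |t|) := by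
  refine ⟨by simp, norm_deriv_complex_tan_mul_ofReal_le hw, fun t => ?_⟩
  simpa using norm_complex_tan_le_norm (abs_re_mul_ofReal_le_abs_im hw t)

lemma three_pi_mul_I_div_four_eq :
    3 * (π : ℂ) * Complex.I / 4 = ((π - π / 4 : ℝ) : ℂ) * Complex.I := by
  push_cast
  ring

lemma norm_exp_three_pi_mul_I_div_four : ‖Complex.exp (3 * (π : ℂ) * Complex.I / 4)‖ = 1 := by
  rw [three_pi_mul_I_div_four_eq, Complex.norm_exp_ofReal_mul_I]

lemma abs_re_exp_three_pi_mul_I_div_four :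
    |(Complex.exp (3 * (π : ℂ) * Complex.I / 4)).re| =
      |(Complex.exp (3 * (π : ℂ) * Complex.I / 4)).im| := by
  rw [three_pi_mul_I_div_four_eq, Complex.exp_ofReal_mul_I_re, Complex.exp_ofReal_mul_I_im,
    cos_pi_sub, sin_pi_sub, cos_pi_div_four, sin_pi_div_four, abs_neg]

theorem stmt_14 :
    (Complex.tan (Complex.exp (3 * (π : ℂ) * Complex.I / 4) * ((0 : ℝ) : ℂ)) = 0)
    ∧
    (∀ t : ℝ,
      ‖deriv (fun t : ℝ => Complex.tan (Complex.exp (3 * (π : ℂ) * Complex.I / 4) * t)) t‖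
        ≤ 1)
    ∧
    (∀ t : ℝ,
      ‖Complex.tan (Complex.exp (3 * (π : ℂ) * Complex.I / 4) * t)‖ ≤ |t|) := by
  simpa only [norm_exp_three_pi_mul_I_div_four, one_mul] using
    stmt_14_general abs_re_exp_three_pi_mul_I_div_four.le
end
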